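/- For every finite tree T with at least two vertices, RTD(C_con(T)) = ℓ(T), where ℓ(T) is the number of leaves of T. -/

import Mathlib

open scoped Classical

noncomputable section

/-! ### Concept classes, VC-dimension, teaching dimension, RTD -/

variable {X : Type*}

/-- A set `S` is shattered by the concept class `𝒞` if every subset of `S`
is the trace on `S` of some concept in `𝒞`. -/
def Shatters [DecidableEq X] (𝒞 : Finset (Finset X)) (S : Finset X) : Prop :=
  ∀ S' ⊆ S, ∃ C ∈ 𝒞, C ∩ S = S'

/-- The VC-dimension of a concept class: the maximum size of a shattered set. -/
def VCD [DecidableEq X] (𝒞 : Finset (Finset X)) : ℕ :=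
  sSup {n | ∃ S : Finset X, Shatters 𝒞 S ∧ S.card = n}

/-- `D` is a teaching set for the concept `C` within the class `𝒞`:
no other concept of `𝒞` agrees with `C` on all of `D`. -/
def IsTeachingSet [DecidableEq X] (𝒞 : Finset (Finset X)) (C D : Finset X) : Prop :=
  ∀ C' ∈ 𝒞, C' ≠ C → ∃ x ∈ D, ¬ ((x ∈ C') ↔ (x ∈ C))

/-- The teaching dimension of the concept `C` within the class `𝒞`:
the minimum size of a teaching set for `C` in `𝒞`. -/
def TD [DecidableEq X] (𝒞 : Finset (Finset X)) (C : Finset X) : ℕ :=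
  sInf {n | ∃ D : Finset X, IsTeachingSet 𝒞 C D ∧ D.card = n}

/-- The minimum teaching dimension over all concepts of the class. -/
def TDmin [DecidableEq X] (𝒞 : Finset (Finset X)) : ℕ :=
  sInf {n | ∃ C ∈ 𝒞, TD 𝒞 C = n}

/-- The recursive teaching dimension: with `𝒞_min` the set of concepts of `𝒞` whose
teaching dimension equals `TDmin 𝒞`, we have `RTD 𝒞 = TDmin 𝒞` if `𝒞 = 𝒞_min`
and `RTD 𝒞 = max (TDmin 𝒞) (RTD (𝒞 \ 𝒞_min))` otherwise. -/
def RTD [DecidableEq X] (𝒞 : Finset (Finset X)) : ℕ :=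
  if h : 𝒞 = 𝒞.filter (fun C => TD 𝒞 C = TDmin 𝒞) then TDmin 𝒞
  else max (TDmin 𝒞) (RTD (𝒞 \ 𝒞.filter (fun C => TD 𝒞 C = TDmin 𝒞)))
termination_by 𝒞.card
decreasing_by
  have hne : 𝒞.Nonempty := by
    rcases Finset.eq_empty_or_nonempty 𝒞 with he | hne
    · exact absurd (by simp [he]) h
    · exact hne
  obtain ⟨C₀, hC₀⟩ := hne
  have hmem : TDmin 𝒞 ∈ {n | ∃ C ∈ 𝒞, TD 𝒞 C = n} :=
    Nat.sInf_mem ⟨TD 𝒞 C₀, C₀, hC₀, rfl⟩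
  obtain ⟨C, hC, hTD⟩ := hmem
  refine Finset.card_lt_card ?_
  refine (Finset.ssubset_iff_of_subset Finset.sdiff_subset).mpr ?_
  exact ⟨C, hC, by simp [Finset.mem_sdiff, Finset.mem_filter, hC, hTD]⟩

/-! ### Graph-theoretic notions -/

/-- The degree of a vertex in a graph on a finite vertex type. -/
def deg {W : Type*} [Fintype W] (T : SimpleGraph W) (v : W) : ℕ :=
  (Finset.univ.filter (fun w => T.Adj v w)).card

/-- A leaf of a graph (in particular, of a tree) is a vertex of degree 1. -/
def IsLeaf {W : Type*} [Fintype W] (T : SimpleGraph W) (v : W) : Prop :=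
  deg T v = 1

/-- The number of leaves of a graph (in particular, of a tree). -/
def leafCount {W : Type*} [Fintype W] (T : SimpleGraph W) : ℕ :=
  (Finset.univ.filter (fun v => IsLeaf T v)).card

variable {V : Type*} [Fintype V] [DecidableEq V]

/-- The open neighborhood of a vertex, as a finset. -/
def nbrFinset (G : SimpleGraph V) (x : V) : Finset V :=
  Finset.univ.filter (fun y => G.Adj x y)

/-- The closed neighborhood of a vertex, as a finset. -/
def closedNbr (G : SimpleGraph V) (x : V) : Finset V :=
  insert x (nbrFinset G x)

/-- The maximum degree `Δ(G)`. -/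
def maxDeg (G : SimpleGraph V) : ℕ :=
  Finset.univ.sup (deg G)

/-- The closed neighborhood of a set of vertices. -/
def closedNbrSet (G : SimpleGraph V) (A : Finset V) : Finset V :=
  A.biUnion (closedNbr G)

/-- The open neighborhood of a set of vertices: `N_G(A) \ A`. -/
def openNbrSet (G : SimpleGraph V) (A : Finset V) : Finset V :=
  closedNbrSet G A \ A

/-- The star class of `G`: all sets `{x} ∪ X` with `X` a set of neighbors of `x`. -/
def Cstar (G : SimpleGraph V) : Finset (Finset V) :=
  Finset.univ.filter (fun C => ∃ x : V, ∃ Y ⊆ nbrFinset G x, C = insert x Y)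

/-- `A` is a connected set of `G`: the induced subgraph `G[A]` is connected. -/
def IsConnSet (G : SimpleGraph V) (A : Finset V) : Prop :=
  (G.induce (A : Set V)).Connected

/-- The class of connected sets of `G` (including the empty set). -/
def Ccon (G : SimpleGraph V) : Finset (Finset V) :=
  Finset.univ.filter (fun A => A = ∅ ∨ IsConnSet G A)

/-- For connected `G`: the maximum number of leaves over all spanning trees of `G`. -/
def ell (G : SimpleGraph V) : ℕ :=
  sSup {k | ∃ T : SimpleGraph V, T ≤ G ∧ T.IsTree ∧ leafCount T = k}

/-- For a general graph `G`: the maximum of `ell` over the connected components of `G`. -/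
def ellGen (G : SimpleGraph V) : ℕ :=
  sSup {k | ∃ c : G.ConnectedComponent, ell (G.induce c.supp) = k}

/-- Every pair of distinct elements of `L` can be connected by a path in `G` which
contains neither `u` nor any element of `L` other than the two endpoints. -/
def ConnectableAvoiding (G : SimpleGraph V) (L : Set V) (u : V) : Prop :=
  ∀ a ∈ L, ∀ b ∈ L, a ≠ b → ∃ p : G.Walk a b, p.IsPath ∧
    ∀ v ∈ p.support, v ≠ u ∧ (v ∈ L → v = a ∨ v = b)

end

/-! Toggling a single point of a member of a Boolean interval `[A, B]` stays in the interval, so a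
teaching set inside it must contain all of `B \ A`; hence a class containing `[A, B]` has recursive
teaching dimension at least `#(B \ A)`. In a connected graph every set of leaves may be removed, so
the class of connected sets contains such an interval on the set of leaves.

Conversely, a connected set of maximal size in a subclass is taught by any subset `D` such that
every connected set containing `D` contains it. For the whole vertex set, the non-cut vertices form
such a `D`: a smaller connected set containing them could be grown one vertex at a time until it
misses a single vertex, which would then be a non-cut vertex. Shrinking `insert v C` to `C`, one
replaces `v` in `D` by a neighbour of `v` in `C`; so every connected set has such a `D` with at most
as many elements as there are non-cut vertices.

In a tree, counting edges shows that every non-cut vertex is a leaf. -/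

section Teaching

open Finset
open scoped symmDiff

variable {X : Type*} [DecidableEq X] {𝒞 𝒟 : Finset (Finset X)} {A B C D L : Finset X} {k : ℕ}

theorem IsTeachingSet.mono (hD : IsTeachingSet 𝒞 C D) (h𝒟 : 𝒟 ⊆ 𝒞) : IsTeachingSet 𝒟 C D :=
  fun C' hC' => hD C' (h𝒟 hC')

theorem isTeachingSet_union_biUnion (𝒞 : Finset (Finset X)) (C : Finset X) :
    IsTeachingSet 𝒞 C (C ∪ 𝒞.biUnion id) := by
  intro C' hC' hne
  contrapose! hne
  ext x
  by_cases hx : x ∈ C ∪ 𝒞.biUnion id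
  · exact hne x hx
  · grind

theorem TD_le_card (hD : IsTeachingSet 𝒞 C D) : TD 𝒞 C ≤ #D :=
  Nat.sInf_le ⟨D, hD, rfl⟩

theorem exists_isTeachingSet_card_eq_TD (𝒞 : Finset (Finset X)) (C : Finset X) :
    ∃ D, IsTeachingSet 𝒞 C D ∧ #D = TD 𝒞 C :=
  Nat.sInf_mem (s := {n | ∃ D, IsTeachingSet 𝒞 C D ∧ #D = n})
    ⟨_, _, isTeachingSet_union_biUnion 𝒞 C, rfl⟩

theorem TD_mono (C : Finset X) (h𝒟 : 𝒟 ⊆ 𝒞) : TD 𝒟 C ≤ TD 𝒞 C := by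
  obtain ⟨D, hD, hcard⟩ := exists_isTeachingSet_card_eq_TD 𝒞 C
  exact hcard ▸ TD_le_card (hD.mono h𝒟)

theorem TDmin_le_TD (hC : C ∈ 𝒞) : TDmin 𝒞 ≤ TD 𝒞 C :=
  Nat.sInf_le ⟨C, hC, rfl⟩

theorem exists_mem_TD_eq_TDmin (h𝒞 : 𝒞.Nonempty) : ∃ C ∈ 𝒞, TD 𝒞 C = TDmin 𝒞 :=
  let ⟨C, hC⟩ := h𝒞
  Nat.sInf_mem (s := {n | ∃ C ∈ 𝒞, TD 𝒞 C = n}) ⟨_, C, hC, rfl⟩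

theorem TDmin_le_of_exists (h : 𝒞.Nonempty → ∃ C ∈ 𝒞, TD 𝒞 C ≤ k) : TDmin 𝒞 ≤ k := by
  rcases 𝒞.eq_empty_or_nonempty with rfl | hne
  · simp [TDmin]
  · obtain ⟨C, hC, hk⟩ := h hne
    exact (TDmin_le_TD hC).trans hk

theorem RTD_le_of_forall_subset (h : ∀ 𝒟 ⊆ 𝒞, 𝒟.Nonempty → ∃ C ∈ 𝒟, TD 𝒟 C ≤ k) :
    RTD 𝒞 ≤ k := by
  induction 𝒞 using RTD.induct with
  | case1 𝒞 hall =>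
    rw [RTD, dif_pos hall]
    exact TDmin_le_of_exists (h 𝒞 Subset.rfl)
  | case2 𝒞 hall ih =>
    rw [RTD, dif_neg hall]
    exact max_le (TDmin_le_of_exists (h 𝒞 Subset.rfl))
      (ih fun 𝒟 h𝒟 => h 𝒟 (h𝒟.trans sdiff_subset))

theorem TDmin_le_RTD_of_subset (h𝒟 : 𝒟 ⊆ 𝒞) : TDmin 𝒟 ≤ RTD 𝒞 := by
  induction 𝒞 using RTD.induct with
  | case1 𝒞 hall =>
    rw [RTD, dif_pos hall]
    exact TDmin_le_of_exists fun ⟨C, hC⟩ =>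
      ⟨C, hC, (TD_mono C h𝒟).trans_eq (filter_eq_self.mp hall.symm C (h𝒟 hC))⟩
  | case2 𝒞 hall ih =>
    rw [RTD, dif_neg hall, le_max_iff]
    by_cases hmin : ∃ C ∈ 𝒟, TD 𝒞 C = TDmin 𝒞
    · obtain ⟨C, hC, hTD⟩ := hmin
      exact .inl ((TDmin_le_TD hC).trans ((TD_mono C h𝒟).trans_eq hTD))
    · push Not at hmin
      have hrest : 𝒟 ⊆ 𝒞 \ 𝒞.filter fun C => TD 𝒞 C = TDmin 𝒞 := fun C hC => by
        simp [h𝒟 hC, hmin C hC]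
      exact .inr (ih hrest)

theorem card_le_TD_of_symmDiff_singleton_mem (h : ∀ x ∈ L, C ∆ {x} ∈ 𝒞) : #L ≤ TD 𝒞 C := by
  obtain ⟨D, hD, hcard⟩ := exists_isTeachingSet_card_eq_TD 𝒞 C
  rw [← hcard]
  refine card_le_card fun x hx => ?_
  have hne : C ∆ {x} ≠ C := by simp
  obtain ⟨y, hyD, hy⟩ := hD _ (h x hx) hne
  have hyx : y = x := by
    by_contra hyx
    simp [mem_symmDiff, hyx] at hy
  exact hyx ▸ hyD

theorem symmDiff_singleton_mem_Icc {x : X} (hC : C ∈ Icc A B) (hx : x ∈ B \ A) :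
    C ∆ {x} ∈ Icc A B := by
  grind [mem_symmDiff]

theorem card_sdiff_le_RTD_of_Icc_subset (hAB : A ⊆ B) (h : Icc A B ⊆ 𝒞) : #(B \ A) ≤ RTD 𝒞 := by
  obtain ⟨C, hC, hTD⟩ := exists_mem_TD_eq_TDmin (nonempty_Icc.mpr hAB)
  calc #(B \ A) ≤ TD (Icc A B) C :=
        card_le_TD_of_symmDiff_singleton_mem fun _ hx => symmDiff_singleton_mem_Icc hC hx
    _ = TDmin (Icc A B) := hTD
    _ ≤ RTD 𝒞 := TDmin_le_RTD_of_subset h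

end Teaching

section ConnectedSets

open Finset

variable {V : Type*} {G : SimpleGraph V} {C D : Finset V} {u v : V}

theorem IsConnSet.nonempty (hC : IsConnSet G C) : C.Nonempty :=
  nonempty_coe_sort.mp (SimpleGraph.Connected.nonempty hC)

theorem isConnSet_singleton (G : SimpleGraph V) (v : V) : IsConnSet G {v} := by
  rw [IsConnSet, coe_singleton, SimpleGraph.induce_singleton_eq_top]
  exact SimpleGraph.connected_top

theorem exists_adj_notMem (hG : G.Preconnected) {S : Set V} (hS : S.Nonempty) (hne : S ≠ .univ) :
    ∃ u ∈ S, ∃ v ∉ S, G.Adj u v := by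
  obtain ⟨a, ha⟩ := hS
  obtain ⟨b, hb⟩ := (Set.ne_univ_iff_exists_notMem S).mp hne
  obtain ⟨p⟩ := hG a b
  obtain ⟨d, -, hfst, hsnd⟩ := p.exists_boundary_dart S ha hb
  exact ⟨d.fst, hfst, d.snd, hsnd, d.adj⟩

/-- `D` is a subset of `C` that forces `C`: every connected set containing `D` contains `C`. In a
tree this says that `C` is the smallest subtree containing `D`. -/
def ConnSpans (G : SimpleGraph V) (D C : Finset V) : Prop :=
  D ⊆ C ∧ ∀ C', IsConnSet G C' → D ⊆ C' → C ⊆ C'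

theorem ConnSpans.nonempty [Nontrivial V] (hD : ConnSpans G D C) (hC : C.Nonempty) :
    D.Nonempty := by
  by_contra! hempty
  obtain ⟨c, hc⟩ := hC
  obtain ⟨a, hac⟩ := exists_ne c
  have hca : c ∈ ({a} : Finset V) := hD.2 {a} (isConnSet_singleton G a) (by simp [hempty]) hc
  exact hac (mem_singleton.mp hca).symm

section DecidableEq

variable [DecidableEq V]

theorem IsConnSet.insert_of_adj (hC : IsConnSet G C) (hu : u ∈ C) (huv : G.Adj u v) :
    IsConnSet G (insert v C) := by
  have hunion : (↑(insert v C) : Set V) = (C : Set V) ∪ {u, v} := by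
    grind
  rw [IsConnSet, hunion]
  exact SimpleGraph.induce_union_connected hC.preconnected
    (SimpleGraph.induce_pair_connected_of_adj huv).preconnected ⟨u, hu, Set.mem_insert u {v}⟩

theorem ConnSpans.exists_card_le_of_insert (hD : ConnSpans G D (insert v C)) (hu : u ∈ C)
    (hv : v ∉ C) (huv : G.Adj u v) : ∃ D', ConnSpans G D' C ∧ #D' ≤ #D := by
  by_cases hvD : v ∈ D
  · refine ⟨insert u (D.erase v), ⟨?_, fun C' hC' hDC' => ?_⟩, ?_⟩
    · exact insert_subset hu (subset_insert_iff.mp hD.1)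
    · have huC' : u ∈ C' := hDC' (mem_insert_self u _)
      have hDvC' : D ⊆ insert v C' := subset_insert_iff.mpr ((subset_insert u _).trans hDC')
      have hCvC' : insert v C ⊆ insert v C' := hD.2 _ (hC'.insert_of_adj huC' huv) hDvC'
      exact (insert_subset_insert_iff hv).mp hCvC'
    · exact (card_insert_le u _).trans_eq (card_erase_add_one hvD)
  · have hDC : D ⊆ C := (subset_insert_iff_of_notMem hvD).mp hD.1
    exact ⟨D, ⟨hDC, fun C' hC' hDC' => (subset_insert v C).trans (hD.2 C' hC' hDC')⟩, le_rfl⟩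

end DecidableEq

variable [Fintype V]

theorem IsConnSet.downward_induction [DecidableEq V] {P : Finset V → Prop}
    (hG : G.Preconnected) (hC : IsConnSet G C) (huniv : P univ)
    (hstep : ∀ C u v, IsConnSet G C → u ∈ C → v ∉ C → G.Adj u v → P (insert v C) → P C) :
    P C := by
  induction C using strongDownwardInductionOn (n := Fintype.card V) with
  | H C ih =>
    by_cases hne : C = univ
    · rwa [hne]
    · obtain ⟨u, hu, v, hv, huv⟩ := exists_adj_notMem hG hC.nonempty (by simpa using hne)
      exact hstep C u v hC hu hv huv
        (ih (card_le_univ _) (ssubset_insert hv) (hC.insert_of_adj hu huv))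
  | _ => exact card_le_univ C

theorem ConnSpans.exists_card_le_of_univ (hG : G.Preconnected) (hD : ConnSpans G D univ)
    (hC : IsConnSet G C) : ∃ D', ConnSpans G D' C ∧ #D' ≤ #D := by
  refine hC.downward_induction (P := fun C => ∃ D', ConnSpans G D' C ∧ #D' ≤ #D) hG
    ⟨D, hD, le_rfl⟩ ?_
  rintro C u v - hu hv huv ⟨D₁, hD₁, hcard₁⟩
  obtain ⟨D₂, hD₂, hcard₂⟩ := hD₁.exists_card_le_of_insert hu hv huv
  exact ⟨D₂, hD₂, hcard₂.trans hcard₁⟩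

variable [DecidableEq V]

theorem mem_Ccon : C ∈ Ccon G ↔ C = ∅ ∨ IsConnSet G C := by
  simp [Ccon]

theorem ConnSpans.isTeachingSet {𝒟 : Finset (Finset V)} (hD : ConnSpans G D C) (hne : D.Nonempty)
    (h𝒟 : 𝒟 ⊆ Ccon G) (hmax : ∀ C' ∈ 𝒟, #C' ≤ #C) : IsTeachingSet 𝒟 C D := by
  intro C' hC' hCC'
  contrapose! hCC'
  have hDC' : D ⊆ C' := fun x hx => (hCC' x hx).mpr (hD.1 hx)
  have hconn : IsConnSet G C' := (mem_Ccon.mp (h𝒟 hC')).resolve_left (hne.mono hDC').ne_empty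
  exact (eq_of_subset_of_card_le (hD.2 C' hconn hDC') (hmax C' hC')).symm

theorem RTD_Ccon_le_card_of_connSpans_univ [Nontrivial V] (hG : G.Preconnected)
    (hD : ConnSpans G D univ) : RTD (Ccon G) ≤ #D := by
  refine RTD_le_of_forall_subset fun 𝒟 h𝒟 hne => ?_
  obtain ⟨C, hC, hmax⟩ := exists_max_image 𝒟 card hne
  refine ⟨C, hC, ?_⟩
  rcases mem_Ccon.mp (h𝒟 hC) with rfl | hconn
  · have hteach : IsTeachingSet 𝒟 ∅ ∅ := fun C' hC' hne' =>
      absurd (card_eq_zero.mp (Nat.le_zero.mp (hmax C' hC'))) hne'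
    exact (TD_le_card hteach).trans (Nat.zero_le _)
  · obtain ⟨D', hD', hcard⟩ := hD.exists_card_le_of_univ hG hconn
    have hteach := hD'.isTeachingSet (hD'.nonempty hconn.nonempty) h𝒟 hmax
    exact (TD_le_card hteach).trans hcard

/-- The vertices whose removal leaves a nonempty connected graph. The vertex of a one-vertex graph
is not among them. -/
noncomputable def noncutVerts (G : SimpleGraph V) : Finset V :=
  univ.filter fun v => IsConnSet G {v}ᶜ

theorem connSpans_noncutVerts_univ (hG : G.Preconnected) : ConnSpans G (noncutVerts G) univ := by
  refine ⟨subset_univ _, fun C hC hsub => ?_⟩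
  suffices noncutVerts G ⊆ C → C = univ from (this hsub).ge
  refine hC.downward_induction (P := fun C => noncutVerts G ⊆ C → C = univ) hG (fun _ => rfl)
    fun C u v hC _ hv _ ih hsub => ?_
  have hinsert : insert v C = univ := ih (hsub.trans (subset_insert v C))
  have hcompl : C = {v}ᶜ := by
    rw [eq_compl_iff_isCompl]
    exact ⟨by simpa using hv, codisjoint_iff.mpr (by simpa [union_comm] using hinsert)⟩
  have hnoncut : v ∈ noncutVerts G := by
    simpa [noncutVerts, ← hcompl] using hC
  exact absurd (hsub hnoncut) hv

theorem RTD_Ccon_le_card_noncutVerts [Nontrivial V] (hG : G.Preconnected) :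
    RTD (Ccon G) ≤ #(noncutVerts G) :=
  RTD_Ccon_le_card_of_connSpans_univ hG (connSpans_noncutVerts_univ hG)

end ConnectedSets

section Leaves

open Finset

variable {V : Type*} [Fintype V] {G : SimpleGraph V} {v : V}

theorem isLeaf_iff_degree_eq_one : IsLeaf G v ↔ G.degree v = 1 := by
  rw [IsLeaf, deg, ← SimpleGraph.card_neighborFinset_eq_degree,
    SimpleGraph.neighborFinset_eq_filter]

theorem IsLeaf.subsingleton_neighborSet (hv : IsLeaf G v) : (G.neighborSet v).Subsingleton := by
  obtain ⟨u, -, hu⟩ :=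
    SimpleGraph.degree_eq_one_iff_existsUnique_adj.mp (isLeaf_iff_degree_eq_one.mp hv)
  exact fun a ha b hb => (hu a ha).trans (hu b hb).symm

variable [DecidableEq V]

theorem mem_Ccon_of_forall_notMem (hG : G.Preconnected) {C : Finset V}
    (hC : ∀ v ∉ C, IsLeaf G v) : C ∈ Ccon G := by
  rw [mem_Ccon]
  refine C.eq_empty_or_nonempty.imp_right fun hne => ?_
  have : Nonempty (C : Set V) := hne.to_subtype
  exact ⟨hG.induce_of_degree_eq_one fun v hv => (hC v hv).subsingleton_neighborSet⟩

theorem leafCount_le_RTD_Ccon (hG : G.Preconnected) : leafCount G ≤ RTD (Ccon G) := by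
  have hIcc : Icc (univ.filter (IsLeaf G))ᶜ univ ⊆ Ccon G := fun C hC =>
    mem_Ccon_of_forall_notMem hG fun v hv => by
      by_contra hleaf
      exact hv ((mem_Icc.mp hC).1 (by simpa using hleaf))
  simpa [leafCount, ← compl_eq_univ_sdiff] using
    card_sdiff_le_RTD_of_Icc_subset (subset_univ _) hIcc

theorem isLeaf_of_isConnSet_compl_singleton (hG : G.IsTree) (hv : IsConnSet G {v}ᶜ) :
    IsLeaf G v := by
  rw [IsConnSet, coe_compl, coe_singleton] at hv
  have hedges : #G.edgeFinset + 1 = Fintype.card V := hG.card_edgeFinset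
  have hedges_compl : #G.edgeFinset - G.degree v + 1 = Fintype.card V - 1 := by
    rw [← G.card_edgeFinset_deleteIncidenceSet, ← G.card_edgeFinset_induce_compl_singleton,
      SimpleGraph.IsTree.card_edgeFinset ⟨hv, hG.isAcyclic.induce _⟩, Fintype.card_compl_set,
      Set.card_singleton]
  have hdeg := G.degree_le_card_edgeFinset v
  rw [isLeaf_iff_degree_eq_one]
  lia

theorem con_rtd_tree_general [Nontrivial V] (hG : G.Preconnected)
    (hleaf : ∀ v, IsConnSet G {v}ᶜ → IsLeaf G v) : RTD (Ccon G) = leafCount G := by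
  refine le_antisymm ?_ (leafCount_le_RTD_Ccon hG)
  calc RTD (Ccon G) ≤ #(noncutVerts G) := RTD_Ccon_le_card_noncutVerts hG
    _ ≤ leafCount G := card_le_card (monotone_filter_right univ fun v _ => hleaf v)

end Leaves

/-- For every finite tree `T` with at least two vertices,
`RTD(C_con(T)) = ℓ(T)`, the number of leaves of `T`. -/
theorem con_rtd_tree {V : Type*} [Fintype V] [DecidableEq V]
    (T : SimpleGraph V) (htree : T.IsTree) (hcard : 2 ≤ Fintype.card V) :
    RTD (Ccon T) = leafCount T := by
  have : Nontrivial V := Fintype.one_lt_card_iff_nontrivial.mp hcard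
  exact con_rtd_tree_general htree.connected.preconnected fun _ =>
    isLeaf_of_isConnSet_compl_singleton htree
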